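/- For all nonnegative integers s and all positive integers n, the sum of EMD(α, β) over all ordered pairs (α, β) ∈ C(s,n) × C(s,n) equals S⊖(s, n−1 | s, n−1), the sum of |λ ⊖ μ| over all ordered pairs (λ, μ) of Young diagrams in Par(s×(n−1)). (Equation (4.4), via the bijection between compositions and bounded Young diagrams.) -/

import Mathlib

open Finset

open scoped Classical in
/-- `Par a b` is the set of Young diagrams (lower sets of boxes) fitting inside an
`a × b` rectangle, encoded as finsets of cells `(i, j)` with `i < a` and `j < b`. -/
noncomputable def Par (a b : ℕ) : Finset (Finset (ℕ × ℕ)) :=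
  ((Finset.range a ×ˢ Finset.range b).powerset).filter
    (fun S => IsLowerSet (S : Set (ℕ × ℕ)))

/-- `Sdiff a b c d` is the sum of `|λ ⊖ μ|` over all `λ ∈ Par(a×b)` and `μ ∈ Par(c×d)`. -/
noncomputable def Sdiff (a b c d : ℕ) : ℕ :=
  ∑ l ∈ Par a b, ∑ m ∈ Par c d, (symmDiff l m).card

/-- The one-dimensional earth mover's distance between two weak compositions
`α, β` of the same number `s` into `n` parts:
`EMD(α,β) = Σ_{j=1}^n |Σ_{i=1}^j (α_i - β_i)|`. -/
def EMD {n : ℕ} (α β : Fin n → ℕ) : ℕ :=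
  ∑ j : Fin n, (∑ i ∈ Finset.univ.filter (fun i : Fin n => i ≤ j),
      ((α i : ℤ) - (β i : ℤ))).natAbs

/-!
A weak composition into `n` parts is determined by its sum and its tail sums of positive index, and
the latter can be any antitone sequence, bounded by the sum, that vanishes from index `n` on: the
column lengths of a Young diagram. For compositions of equal sum, differences of prefix sums are, up
to sign, differences of tail sums; and the symmetric difference of two Young diagrams has in each
column as many cells as the column lengths differ by. So this bijection carries the earth mover's
distance to the size of the symmetric difference, and the two double sums agree term by term.
-/

section TailSum

variable {M : Type*} {n : ℕ}

/-- The tail sum `α k + α (k + 1) + ⋯ + α (n - 1)`, with `k : ℕ` so that it is defined, and zero,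
beyond the last index as well. -/
def tailSum [AddCommMonoid M] (α : Fin n → M) (k : ℕ) : M :=
  ∑ i : Fin n with k ≤ i.val, α i

theorem tailSum_zero [AddCommMonoid M] (α : Fin n → M) : tailSum α 0 = ∑ i, α i := by
  simp [tailSum]

theorem tailSum_eq_zero_of_le [AddCommMonoid M] (α : Fin n → M) {k : ℕ} (hk : n ≤ k) :
    tailSum α k = 0 := by
  rw [tailSum, filter_false_of_mem fun i _ => by omega, sum_empty]

theorem tailSum_eq_add_tailSum_succ [AddCommMonoid M] (α : Fin n → M) (i : Fin n) :
    tailSum α i = α i + tailSum α (i + 1) := by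
  have hsplit : ({x | i.val ≤ x.val} : Finset (Fin n)) =
      insert i ({x | i.val + 1 ≤ x.val} : Finset (Fin n)) := by
    ext x
    simp only [mem_filter_univ, mem_insert, Fin.ext_iff]
    omega
  rw [tailSum, hsplit, sum_insert (by simp), tailSum]

theorem sum_filter_le_add_tailSum_succ [AddCommMonoid M] (α : Fin n → M) (j : Fin n) :
    ∑ i with i ≤ j, α i + tailSum α (j + 1) = ∑ i, α i := by
  simp only [tailSum, Nat.add_one_le_iff, ← not_le]
  exact sum_filter_add_sum_filter_not univ (· ≤ j) α

theorem tailSum_antitone [AddCommMonoid M] [PartialOrder M] [IsOrderedAddMonoid M]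
    [CanonicallyOrderedAdd M] (α : Fin n → M) : Antitone (tailSum α) := fun _ _ hab =>
  sum_le_sum_of_subset <| monotone_filter_right univ fun _ _ => hab.trans

theorem tailSum_injective [AddCancelCommMonoid M] :
    Function.Injective (tailSum : (Fin n → M) → ℕ → M) := by
  intro α β h
  funext i
  have hi := tailSum_eq_add_tailSum_succ α i
  rw [h, tailSum_eq_add_tailSum_succ β i] at hi
  exact (add_right_cancel hi).symm

theorem exists_tailSum_eq [AddCommMonoid M] [PartialOrder M] [CanonicallyOrderedAdd M]
    {e : ℕ → M} (he : Antitone e) (hn : e n = 0) : ∃ α : Fin n → M, tailSum α = e := by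
  choose d hd using fun k : ℕ => exists_add_of_le (he k.le_succ)
  refine ⟨fun i => d i, funext fun k => ?_⟩
  obtain hk | hk := le_total n k
  · rw [tailSum_eq_zero_of_le _ hk, nonpos_iff_eq_zero.mp ((he hk).trans_eq hn)]
  · induction hk using Nat.decreasingInduction with
    | self => rw [tailSum_eq_zero_of_le _ le_rfl, hn]
    | of_succ k hk ih =>
      rw [tailSum_eq_add_tailSum_succ _ ⟨k, hk⟩, ih, hd k, add_comm]

end TailSum

theorem EMD_eq_sum_natAbs_tailSum_sub {n : ℕ} {α β : Fin n → ℕ} (h : ∑ i, α i = ∑ i, β i) :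
    EMD α β = ∑ j ∈ range n, ((tailSum α (j + 1) : ℕ) - (tailSum β (j + 1) : ℕ) : ℤ).natAbs := by
  rw [EMD, sum_range]
  refine sum_congr rfl fun j _ => ?_
  have hα := sum_filter_le_add_tailSum_succ α j
  have hβ := sum_filter_le_add_tailSum_succ β j
  rw [sum_sub_distrib, ← Nat.cast_sum, ← Nat.cast_sum]
  omega

theorem card_symmDiff_range (a b : ℕ) :
    (symmDiff (range a) (range b)).card = ((a : ℤ) - b).natAbs := by
  wlog hab : a ≤ b generalizing a b
  · rw [symmDiff_comm, this b a (le_of_not_ge hab), ← Int.natAbs_neg, neg_sub]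
  rw [symmDiff_of_le (range_subset_range.mpr hab),
    card_sdiff_of_subset (range_subset_range.mpr hab), card_range, card_range]
  omega

section Young

variable {Y Z : YoungDiagram} {n : ℕ}

theorem colLen_injective : Function.Injective YoungDiagram.colLen := by
  intro Y Z h
  ext ⟨i, j⟩
  rw [YoungDiagram.mem_cells, YoungDiagram.mem_cells, YoungDiagram.mem_iff_lt_colLen,
    YoungDiagram.mem_iff_lt_colLen, h]

theorem snd_lt_of_mem_cells (hY : Y.colLen n = 0) {c : ℕ × ℕ} (hc : c ∈ Y.cells) : c.2 < n := by
  by_contra! hn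
  have hlt : c.1 < Y.colLen c.2 := YoungDiagram.mem_iff_lt_colLen.mp hc
  have hle := Y.colLen_anti n c.2 hn
  omega

theorem card_symmDiff_cells (hY : Y.colLen n = 0) (hZ : Z.colLen n = 0) :
    (symmDiff Y.cells Z.cells).card =
      ∑ j ∈ range n, ((Y.colLen j : ℤ) - Z.colLen j).natAbs := by
  have hcolumns : ∀ c ∈ symmDiff Y.cells Z.cells, c.2 ∈ range n := fun c hc =>
    mem_range.mpr <| (mem_symmDiff.mp hc).elim (fun h => snd_lt_of_mem_cells hY h.1)
      fun h => snd_lt_of_mem_cells hZ h.1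
  rw [card_eq_sum_card_fiberwise hcolumns]
  refine sum_congr rfl fun j _ => ?_
  have hcolumn : {c ∈ symmDiff Y.cells Z.cells | c.2 = j} =
      symmDiff (range (Y.colLen j)) (range (Z.colLen j)) ×ˢ {j} := by
    ext ⟨i, k⟩
    simp only [mem_filter, mem_symmDiff, mem_product, mem_singleton, mem_range,
      YoungDiagram.mem_cells, YoungDiagram.mem_iff_lt_colLen]
    exact and_congr_left fun hk => by rw [hk]
  rw [hcolumn, card_product, card_singleton, mul_one, card_symmDiff_range]

theorem mem_Par_iff {a b : ℕ} {S : Finset (ℕ × ℕ)} :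
    S ∈ Par a b ↔ ∃ Y : YoungDiagram, Y.cells = S ∧ Y.colLen 0 ≤ a ∧ Y.colLen b = 0 := by
  simp only [Par, mem_filter, mem_powerset]
  constructor
  · rintro ⟨hsub, hlower⟩
    let Y : YoungDiagram := ⟨S, hlower⟩
    have hbox {i j : ℕ} (hij : i < Y.colLen j) : i < a ∧ j < b := by
      simpa using hsub (YoungDiagram.mem_iff_lt_colLen.mpr hij : (i, j) ∈ Y.cells)
    refine ⟨Y, rfl, ?_, ?_⟩
    · by_contra! ha
      exact lt_irrefl a (hbox ha).1
    · by_contra hb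
      exact lt_irrefl b (hbox (Nat.pos_of_ne_zero hb)).2
  · rintro ⟨Y, rfl, ha, hb⟩
    refine ⟨fun c hc => ?_, Y.isLowerSet⟩
    have hlt : c.1 < Y.colLen c.2 := YoungDiagram.mem_iff_lt_colLen.mp hc
    have hle := Y.colLen_anti 0 c.2 (Nat.zero_le _)
    exact mem_product.mpr
      ⟨mem_range.mpr (by omega), mem_range.mpr (snd_lt_of_mem_cells hb hc)⟩

end Young

section Bijection

variable {n : ℕ}

/-- The Young diagram of a composition `α`, having `α k` rows of length `k`; the rows of length
zero pad it to `∑ i, α i` rows. It is encoded by its columns, of lengths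
`tailSum α 1, tailSum α 2, …`. -/
def compositionDiagram (α : Fin n → ℕ) : YoungDiagram where
  cells := {c ∈ range (∑ i, α i) ×ˢ range n | c.1 < tailSum α (c.2 + 1)}
  isLowerSet := by
    rintro ⟨i, j⟩ ⟨i', j'⟩ ⟨hi : i' ≤ i, hj : j' ≤ j⟩ h
    have hanti := tailSum_antitone α (Nat.add_le_add_right hj 1)
    simp only [mem_coe, mem_filter, mem_product, mem_range] at h ⊢
    omega

theorem colLen_compositionDiagram (α : Fin n → ℕ) (j : ℕ) :
    (compositionDiagram α).colLen j = tailSum α (j + 1) := by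
  refine eq_of_forall_lt_iff fun i => ?_
  rw [← YoungDiagram.mem_iff_lt_colLen, ← YoungDiagram.mem_cells]
  simp only [compositionDiagram, mem_filter, mem_product, mem_range, and_iff_right_iff_imp]
  intro hi
  constructor
  · rw [← tailSum_zero]
    exact hi.trans_le (tailSum_antitone α (Nat.zero_le _))
  · by_contra! hj
    rw [tailSum_eq_zero_of_le α (hj.trans j.le_succ)] at hi
    exact Nat.not_lt_zero i hi

theorem EMD_eq_card_symmDiff {α β : Fin n → ℕ} (h : ∑ i, α i = ∑ i, β i) :
    EMD α β =
      (symmDiff (compositionDiagram α).cells (compositionDiagram β).cells).card := by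
  have hcol (γ : Fin n → ℕ) : (compositionDiagram γ).colLen n = 0 := by
    rw [colLen_compositionDiagram, tailSum_eq_zero_of_le γ n.le_succ]
  simp only [EMD_eq_sum_natAbs_tailSum_sub h, card_symmDiff_cells (hcol α) (hcol β),
    colLen_compositionDiagram]

theorem eq_of_compositionDiagram_eq {α β : Fin n → ℕ} (hsum : ∑ i, α i = ∑ i, β i)
    (h : compositionDiagram α = compositionDiagram β) : α = β := by
  refine tailSum_injective (funext fun k => ?_)
  cases k with
  | zero => rw [tailSum_zero, tailSum_zero, hsum]
  | succ j => rw [← colLen_compositionDiagram, h, colLen_compositionDiagram]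

theorem exists_compositionDiagram_eq {s m : ℕ} {Y : YoungDiagram} (hs : Y.colLen 0 ≤ s)
    (hm : Y.colLen m = 0) :
    ∃ α : Fin (m + 1) → ℕ, ∑ i, α i = s ∧ compositionDiagram α = Y := by
  let e : ℕ → ℕ
    | 0 => s
    | j + 1 => Y.colLen j
  have he : Antitone e := antitone_nat_of_succ_le fun
    | 0 => hs
    | j + 1 => Y.colLen_anti j (j + 1) j.le_succ
  obtain ⟨α, hα⟩ := exists_tailSum_eq (n := m + 1) he hm
  refine ⟨α, ?_, colLen_injective (funext fun j => ?_)⟩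
  · rw [← tailSum_zero, hα]
  · rw [colLen_compositionDiagram, hα]

theorem bijOn_cells_compositionDiagram (s m : ℕ) :
    Set.BijOn (fun α : Fin (m + 1) → ℕ => (compositionDiagram α).cells)
      (Finset.Nat.antidiagonalTuple (m + 1) s) (Par s m) := by
  simp only [Set.BijOn, Set.MapsTo, Set.InjOn, Set.SurjOn, Set.subset_def, Set.mem_image, mem_coe,
    Finset.Nat.mem_antidiagonalTuple]
  refine ⟨fun α hα => mem_Par_iff.mpr ⟨_, rfl, ?_, ?_⟩, fun α hα β hβ h => ?_, fun S hS => ?_⟩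
  · rw [colLen_compositionDiagram, ← hα, ← tailSum_zero]
    exact tailSum_antitone α (Nat.zero_le _)
  · rw [colLen_compositionDiagram, tailSum_eq_zero_of_le α le_rfl]
  · exact eq_of_compositionDiagram_eq (hα.trans hβ.symm) (YoungDiagram.ext h)
  · obtain ⟨Y, rfl, hs, hm⟩ := mem_Par_iff.mp hS
    obtain ⟨α, hα, rfl⟩ := exists_compositionDiagram_eq hs hm
    exact ⟨α, hα, rfl⟩

theorem sum_compositionDiagram_eq_sum_Par {M : Type*} [AddCommMonoid M] (s m : ℕ)
    (f : Finset (ℕ × ℕ) → M) :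
    ∑ α ∈ Finset.Nat.antidiagonalTuple (m + 1) s, f (compositionDiagram α).cells =
      ∑ S ∈ Par s m, f S :=
  have h := bijOn_cells_compositionDiagram s m
  sum_nbij _ h.mapsTo h.injOn h.surjOn fun _ _ => rfl

end Bijection

/-- Equation (4.4): the sum of `EMD(α,β)` over all ordered pairs of weak compositions of
`s` into `n` parts equals `S⊖(s, n-1 | s, n-1)`. -/
theorem sum_EMD_eq_sdiff (s n : ℕ) (hn : 1 ≤ n) :
    ∑ p ∈ Finset.Nat.antidiagonalTuple n s ×ˢ Finset.Nat.antidiagonalTuple n s,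
        EMD p.1 p.2
      = Sdiff s (n - 1) s (n - 1) := by
  obtain ⟨m, rfl⟩ := Nat.exists_eq_add_of_le' hn
  rw [Nat.add_sub_cancel, Sdiff, sum_product, ← sum_compositionDiagram_eq_sum_Par]
  refine sum_congr rfl fun α hα => ?_
  rw [← sum_compositionDiagram_eq_sum_Par]
  refine sum_congr rfl fun β hβ => ?_
  rw [Finset.Nat.mem_antidiagonalTuple] at hα hβ
  exact EMD_eq_card_symmDiff (hα.trans hβ.symm)
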